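/- For every superlinear function g : ℕ → ℕ and every α ≥ 1, the class C_g is not adaptively subtractively α-robustly learnable; moreover, there exists an adaptive subtractive adversary V_sub with fixed constant budget that is a universal α-adversary for C_g. -/

import Mathlib

open scoped ENNReal NNReal

/-- Total variation distance between two discrete distributions. -/
noncomputable def tv {X : Type*} (p q : PMF X) : ℝ :=
  (∑' x, |(p x).toReal - (q x).toReal|) / 2

/-- The distribution of an i.i.d. sample of size `m` from `p`, viewed as a multiset. -/
noncomputable def iid {X : Type*} (p : PMF X) : ℕ → PMF (Multiset X)
  | 0 => PMF.pure 0
  | n + 1 => (iid p n).bind fun s => p.map fun x => x ::ₘ s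

/-- `|Q|^m` : first draw `q ∼ Q`, then an i.i.d. sample `S ∼ q^m`. -/
noncomputable def metaSample {X : Type*} (Q : PMF (PMF X)) (m : ℕ) : PMF (Multiset X) :=
  Q.bind fun q => iid q m

/-- An adaptive adversary: a randomized map from samples (finite multisets) to samples. -/
abbrev Adversary (X : Type*) := Multiset X → PMF (Multiset X)

/-- `V(P)`: the distribution of `V S` for `S ∼ P` (including internal randomness). -/
noncomputable def advPush {X : Type*} (V : Adversary X) (P : PMF (Multiset X)) :
    PMF (Multiset X) := P.bind V

/-- An additive adversary only adds points: `S ⊆ V(S)` almost surely. -/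
def IsAdditive {X : Type*} (V : Adversary X) : Prop :=
  ∀ S T, T ∈ (V S).support → S ≤ T

/-- A subtractive adversary only removes points: `V(S) ⊆ S` almost surely. -/
def IsSubtractive {X : Type*} (V : Adversary X) : Prop :=
  ∀ S T, T ∈ (V S).support → T ≤ S

/-- Fixed constant budget `η`: `|V(S)|` depends only on `|S|` (via `c`), and for every `m`,
`η m − 1 < m·budget(V,m) ≤ η m` where `m·budget(V,m) = ||V(S)| − |S||`. -/
def FixedBudget {X : Type*} (V : Adversary X) (η : ℝ) : Prop :=
  ∃ c : ℕ → ℕ, (∀ S T, T ∈ (V S).support → Multiset.card T = c (Multiset.card S)) ∧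
    ∀ m : ℕ, η * m - 1 < |(c m : ℝ) - m| ∧ |(c m : ℝ) - m| ≤ η * m

/-- Fixed constant budget `η` for an additive adversary (`m·budget(V,m) = |V(S)| − |S|`). -/
def FixedBudgetAdd {X : Type*} (V : Adversary X) (η : ℝ) : Prop :=
  ∃ c : ℕ → ℕ, (∀ S T, T ∈ (V S).support → Multiset.card T = c (Multiset.card S)) ∧
    ∀ m : ℕ, η * m - 1 < (c m : ℝ) - m ∧ (c m : ℝ) - m ≤ η * m

/-- Fixed constant budget `η` for a subtractive adversary (`m·budget(V,m) = |S| − |V(S)|`). -/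
def FixedBudgetSub {X : Type*} (V : Adversary X) (η : ℝ) : Prop :=
  ∃ c : ℕ → ℕ, (∀ S T, T ∈ (V S).support → Multiset.card T = c (Multiset.card S)) ∧
    ∀ m : ℕ, η * m - 1 < (m : ℝ) - c m ∧ (m : ℝ) - c m ≤ η * m

/-- Probability of an event under a discrete distribution. -/
noncomputable def probEvent {β : Type*} (P : PMF β) (E : Set β) : ℝ≥0∞ :=
  P.toOuterMeasure E

/-- `A` with sample complexity `mc` learns the class `C` against adversary `V`,
up to error `bound + ε` with confidence `1 − δ` once `m ≥ mc ε δ`. -/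
def RobustLearnerFor {X : Type*} (C : Set (PMF X)) (A : Multiset X → PMF X)
    (mc : ℝ → ℝ → ℕ) (V : Adversary X) (bound : ℝ) : Prop :=
  ∀ p ∈ C, ∀ ε δ : ℝ, 0 < ε → ε < 1 → 0 < δ → δ < 1 →
    ∀ m : ℕ, mc ε δ ≤ m →
      1 - ENNReal.ofReal δ ≤
        probEvent ((iid p m).bind V) {T | tv (A T) p ≤ bound + ε}

/-- `C` is adaptively α-robustly learnable w.r.t. the single adversary `V` with budget `η`. -/
def RobustlyLearnableWrt {X : Type*} (C : Set (PMF X)) (α : ℝ)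
    (V : Adversary X) (η : ℝ) : Prop :=
  ∃ A mc, RobustLearnerFor C A mc V (α * η)

/-- `V` (with budget `η`) is a universal α-adversary for `C`. -/
def UniversalAdversary {X : Type*} (C : Set (PMF X)) (α : ℝ)
    (V : Adversary X) (η : ℝ) : Prop :=
  ¬ RobustlyLearnableWrt C α V η

/-- `C` is adaptively α-robustly learnable w.r.t. a class `𝒱` of adversaries
(each given with its budget). -/
def RobustlyLearnableWrtClass {X : Type*} (C : Set (PMF X)) (α : ℝ)
    (𝒱 : Set (Adversary X × ℝ)) : Prop :=
  ∃ A mc, ∀ Vη ∈ 𝒱, RobustLearnerFor C A mc Vη.1 (α * Vη.2)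

/-- `C` is adaptively additively α-robustly learnable: one learner works simultaneously
against all additive adaptive adversaries with fixed constant budgets. -/
def AdditivelyRobustlyLearnable {X : Type*} (C : Set (PMF X)) (α : ℝ) : Prop :=
  ∃ A mc, ∀ V : Adversary X, ∀ η : ℝ, 0 < η → η < 1 →
    IsAdditive V → FixedBudgetAdd V η → RobustLearnerFor C A mc V (α * η)

/-- `C` is adaptively subtractively α-robustly learnable. -/
def SubtractivelyRobustlyLearnable {X : Type*} (C : Set (PMF X)) (α : ℝ) : Prop :=
  ∃ A mc, ∀ V : Adversary X, ∀ η : ℝ, 0 < η → η < 1 →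
    IsSubtractive V → FixedBudgetSub V η → RobustLearnerFor C A mc V (α * η)

/-- The pair `(V1, V2)` successfully `(γ,ζ)`-confuses `C`-generated samples of size `m`. -/
def ConfusesPair {X : Type*} (C : Set (PMF X)) (V1 V2 : Adversary X)
    (γ ζ : ℝ) (m : ℕ) : Prop :=
  ∃ p ∈ C, ∃ Q : PMF (PMF X), Q.support ⊆ C ∧
    (∀ q ∈ Q.support, γ < tv p q) ∧
    tv (advPush V1 (metaSample Q m)) (advPush V2 (iid p m)) < ζ

/-- A single adversary `V` successfully `(γ,ζ)`-confuses `C`-generated samples of size `m`. -/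
def Confuses {X : Type*} (C : Set (PMF X)) (V : Adversary X) (γ ζ : ℝ) (m : ℕ) : Prop :=
  ConfusesPair C V V γ ζ m

/-- `p` is the distribution `p_{i,j,k} = (1 − 1/j)·δ_{(0,0)} + (1/j − 1/k)·U_{B_i×{2j+1}}
 + (1/k)·δ_{(i,2j+2)}` on `ℕ × ℕ`. -/
def IsPijk (B : ℕ → Finset ℕ) (i j k : ℕ) (p : PMF (ℕ × ℕ)) : Prop :=
  ∀ x : ℕ × ℕ,
    p x = (1 - ((j : ℝ≥0∞))⁻¹) * (if x = (0, 0) then 1 else 0)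
      + (((j : ℝ≥0∞))⁻¹ - ((k : ℝ≥0∞))⁻¹) *
          (if x.1 ∈ B i ∧ x.2 = 2 * j + 1 then (((B i).card : ℝ≥0∞))⁻¹ else 0)
      + ((k : ℝ≥0∞))⁻¹ * (if x = (i, 2 * j + 2) then 1 else 0)

/-- The class `C_g = {p_{i,j,g(j)} : i, j ∈ ℕ}` (for the meaningful parameters). -/
def Cg (B : ℕ → Finset ℕ) (g : ℕ → ℕ) : Set (PMF (ℕ × ℕ)) :=
  {p | ∃ i j : ℕ, 1 ≤ j ∧ j < g j ∧ (B i).Nonempty ∧ IsPijk B i j (g j) p}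

/-- `g` is superlinear: `g(n)/n → ∞`. -/
def Superlinear (g : ℕ → ℕ) : Prop :=
  Filter.Tendsto (fun n => (g n : ℝ) / n) Filter.atTop Filter.atTop

/-!
Fix `j` with `g j` much larger than `j` and let the adversary have budget `η = 4 / g j`. The index
of `p_{i,j,g(j)}` is revealed only by the marked point `(i, 2j+2)`, which has mass `1 / g j`; by
Markov's inequality a sample of size `m` holds at most `ηm` copies of it with probability at least
`3/4`, so deleting the marked points first hides the index.

What remains of the sample shows only the points of `B_i` that were drawn. Take for `B_i` the graph
of a function `σ : Fin (2m) → Bool`. Flipping `σ` at all unseen arguments, of which there are at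
least `m`, leaves the corrupted sample unchanged but moves the distribution by at least
`(1/j - 1/g(j)) / 4 > 2αη` in total variation. For a fixed sample the flip is a permutation of the
`σ`s, so on average over `σ` every learner fails with probability at least `1/2` on such samples.
-/

section Expectation

variable {β γ : Type*}

/-- The expectation of an extended nonnegative function under a discrete distribution. -/
noncomputable def expect (P : PMF β) (h : β → ℝ≥0∞) : ℝ≥0∞ := ∑' x, P x * h x

theorem expect_pure (b : β) (h : β → ℝ≥0∞) : expect (PMF.pure b) h = h b := by
  rw [expect, tsum_eq_single b fun c hc => by simp [hc]]
  simp

theorem expect_bind (P : PMF β) (f : β → PMF γ) (h : γ → ℝ≥0∞) :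
    expect (P.bind f) h = expect P fun a => expect (f a) h := by
  simp only [expect, PMF.bind_apply, ← ENNReal.tsum_mul_left, ← ENNReal.tsum_mul_right]
  rw [ENNReal.tsum_comm]
  simp only [mul_assoc]

theorem expect_map (P : PMF β) (f : β → γ) (h : γ → ℝ≥0∞) :
    expect (P.map f) h = expect P fun a => h (f a) := by
  simp only [← PMF.bind_pure_comp, expect_bind, Function.comp_apply, expect_pure]

theorem expect_const (P : PMF β) (c : ℝ≥0∞) : expect P (fun _ => c) = c := by
  rw [expect, ENNReal.tsum_mul_right, P.tsum_coe, one_mul]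

theorem expect_add (P : PMF β) (f h : β → ℝ≥0∞) :
    expect P (fun x => f x + h x) = expect P f + expect P h := by
  simp only [expect, mul_add, ENNReal.tsum_add]

theorem expect_const_mul (P : PMF β) (c : ℝ≥0∞) (h : β → ℝ≥0∞) :
    expect P (fun x => c * h x) = c * expect P h := by
  simp only [expect, mul_left_comm _ c, ENNReal.tsum_mul_left]

theorem expect_mono (P : PMF β) {f h : β → ℝ≥0∞} (hfh : ∀ x, f x ≤ h x) :
    expect P f ≤ expect P h :=
  ENNReal.tsum_le_tsum fun x => mul_le_mul_right (hfh x) (P x)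

theorem expect_finsetSum {ι : Type*} (P : PMF β) (s : Finset ι) (f : ι → β → ℝ≥0∞) :
    expect P (fun x => ∑ i ∈ s, f i x) = ∑ i ∈ s, expect P (f i) := by
  simp only [expect, Finset.mul_sum]
  exact Summable.tsum_finsetSum fun _ _ => ENNReal.summable

theorem probEvent_eq_expect_indicator (P : PMF β) (E : Set β) :
    probEvent P E = expect P (E.indicator 1) := by
  rw [probEvent, PMF.toOuterMeasure_apply]
  refine tsum_congr fun x => ?_
  by_cases hx : x ∈ E <;> simp [hx]

theorem probEvent_bind (P : PMF β) (f : β → PMF γ) (E : Set γ) :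
    probEvent (P.bind f) E = expect P fun a => probEvent (f a) E :=
  PMF.toOuterMeasure_bind_apply P f E

theorem probEvent_le_one (P : PMF β) (E : Set β) : probEvent P E ≤ 1 := by
  rw [probEvent_eq_expect_indicator, ← expect_const P 1]
  exact expect_mono P (Set.indicator_le_self E 1)

theorem probEvent_add_le_one_of_disjoint (P : PMF β) {E F : Set β} (hEF : Disjoint E F) :
    probEvent P E + probEvent P F ≤ 1 := by
  calc probEvent P E + probEvent P F = probEvent P (E ∪ F) := by
        simp only [probEvent_eq_expect_indicator, ← expect_add,
          Set.indicator_union_of_disjoint hEF]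
    _ ≤ 1 := probEvent_le_one P (E ∪ F)

theorem mul_probEvent_le_expect (P : PMF β) (h : β → ℝ≥0∞) (a : ℝ≥0∞) :
    a * probEvent P {x | a ≤ h x} ≤ expect P h := by
  rw [probEvent_eq_expect_indicator, ← expect_const_mul]
  refine expect_mono P fun x => ?_
  by_cases hx : a ≤ h x <;> simp [hx]

end Expectation

section Sample

variable {X Y : Type*}

theorem iid_map (r : PMF Y) (f : Y → X) (m : ℕ) :
    iid (r.map f) m = (iid r m).map (Multiset.map f) := by
  induction m with
  | zero => simp [iid, PMF.pure_map]
  | succ m ih =>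
    simp only [iid, ih, PMF.bind_map, PMF.map_bind, PMF.map_comp, Function.comp_def,
      Multiset.map_cons]

theorem card_of_mem_support_iid (p : PMF X) {m : ℕ} {S : Multiset X}
    (hS : S ∈ (iid p m).support) : S.card = m := by
  induction m generalizing S with
  | zero => simp_all [iid]
  | succ m ih =>
    simp only [iid, PMF.mem_support_bind_iff, PMF.mem_support_map_iff] at hS
    obtain ⟨s, hs, x, -, rfl⟩ := hS
    rw [Multiset.card_cons, ih hs]

theorem map_apply_of_injective (r : PMF Y) {f : Y → X} (hf : Function.Injective f)
    (y : Y) : r.map f (f y) = r y := by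
  classical
  simp [PMF.map_apply, hf.eq_iff]

theorem map_apply_of_notMem_range (r : PMF Y) {f : Y → X} {x : X}
    (hx : x ∉ Set.range f) : r.map f x = 0 := by
  rw [PMF.apply_eq_zero_iff, PMF.mem_support_map_iff]
  rintro ⟨y, -, rfl⟩
  exact hx ⟨y, rfl⟩

variable [DecidableEq Y]

theorem expect_count_iid (r : PMF Y) (y : Y) (m : ℕ) :
    expect (iid r m) (fun S => (S.count y : ℝ≥0∞)) = m * r y := by
  have expect_ite : expect r (fun x => if y = x then 1 else 0) = r y := by
    simp [expect]
  induction m with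
  | zero => simp [iid, expect_pure]
  | succ m ih =>
    simp only [iid, expect_bind, expect_map, Multiset.count_cons, Nat.cast_add, Nat.cast_ite,
      Nat.cast_one, Nat.cast_zero, expect_add, expect_const, expect_ite, ih]
    ring

theorem probEvent_iid_mul_mean_le_count_le (r : PMF Y) {y : Y} (hy : r y ≠ 0) {m : ℕ} (hm : m ≠ 0)
    (c : ℝ≥0∞) : probEvent (iid r m) {S | c * (m * r y) ≤ S.count y} ≤ c⁻¹ := by
  rw [ENNReal.le_inv_iff_mul_le, mul_comm]
  have markov := mul_probEvent_le_expect (iid r m) (fun S => (S.count y : ℝ≥0∞)) (c * (m * r y))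
  rw [expect_count_iid, mul_right_comm] at markov
  have mean_ne_zero : (m : ℝ≥0∞) * r y ≠ 0 := mul_ne_zero (by exact_mod_cast hm) hy
  have mean_ne_top := ENNReal.mul_ne_top (ENNReal.natCast_ne_top m) (r.apply_ne_top y)
  exact (ENNReal.mul_le_mul_iff_left mean_ne_zero mean_ne_top).1 (by rwa [one_mul])

theorem probEvent_iid_compl_count_le_mul_card_le (r : PMF Y) {y : Y} (hy : r y ≠ 0) {m : ℕ}
    (hm : m ≠ 0) {c : ℝ≥0∞} {η : ℝ} (hη : ENNReal.ofReal η = c * r y) :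
    probEvent (iid r m) {S | S.card = m ∧ (S.count y : ℝ) ≤ η * S.card}ᶜ ≤ c⁻¹ := by
  refine (PMF.toOuterMeasure_mono _ ?_).trans (probEvent_iid_mul_mean_le_count_le r hy hm c)
  rintro S ⟨hS, hS_supp⟩
  have card_S := card_of_mem_support_iid r hS_supp
  have lt_count : η * m < S.count y := by simpa [card_S] using hS
  calc c * (m * r y) = ENNReal.ofReal (η * m) := by
        rw [ENNReal.ofReal_mul' (Nat.cast_nonneg m), hη, ENNReal.ofReal_natCast, mul_right_comm,
          mul_assoc]
    _ ≤ S.count y := by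
        rw [← ENNReal.ofReal_natCast]
        exact ENNReal.ofReal_le_ofReal lt_count.le

end Sample

section TotalVariation

variable {X : Type*}

theorem summable_toReal_pmf (p : PMF X) : Summable fun x => (p x).toReal :=
  ENNReal.summable_toReal p.tsum_coe_ne_top

theorem summable_abs_toReal_sub (p q : PMF X) :
    Summable fun x => |(p x).toReal - (q x).toReal| :=
  ((summable_toReal_pmf p).sub (summable_toReal_pmf q)).abs

theorem tv_le_tv_add_tv (a p q : PMF X) : tv p q ≤ tv a p + tv a q := by
  have hp := summable_abs_toReal_sub a p
  have hq := summable_abs_toReal_sub a q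
  rw [tv, tv, tv, ← add_div, ← hp.tsum_add hq]
  refine div_le_div_of_nonneg_right ?_ zero_le_two
  refine (summable_abs_toReal_sub p q).tsum_le_tsum (fun x => ?_) (hp.add hq)
  rw [abs_sub_comm (a x).toReal]
  exact abs_sub_le _ _ _

theorem card_mul_div_two_le_tv {p q : PMF X} {F : Finset X} {w : ℝ}
    (hF : ∀ x ∈ F, w ≤ (p x).toReal - (q x).toReal) : F.card * w / 2 ≤ tv p q := by
  rw [tv, ← nsmul_eq_mul]
  gcongr
  calc F.card • w ≤ ∑ x ∈ F, |(p x).toReal - (q x).toReal| :=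
        Finset.card_nsmul_le_sum _ _ _ fun x hx => (hF x hx).trans (le_abs_self _)
    _ ≤ ∑' x, |(p x).toReal - (q x).toReal| :=
        (summable_abs_toReal_sub p q).sum_le_tsum F fun _ _ => abs_nonneg _

theorem probEvent_tv_le_add_probEvent_tv_le_le_one {β : Type*} {p q : PMF X} {t : ℝ}
    (hpq : 2 * t < tv p q) (P : PMF β) (A : β → PMF X) :
    probEvent P {T | tv (A T) p ≤ t} + probEvent P {T | tv (A T) q ≤ t} ≤ 1 := by
  refine probEvent_add_le_one_of_disjoint P (Set.disjoint_left.2 fun T hp hq => ?_)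
  have := tv_le_tv_add_tv (A T) p q
  simp only [Set.mem_ofPred_eq] at hp hq
  linarith

end TotalVariation

section Swap

variable {X Y ι : Type*}

theorem sum_le_card_div_two_of_add_perm_le_one [Fintype ι] (π : Equiv.Perm ι) {u : ι → ℝ≥0∞}
    (hu : ∀ σ, u σ + u (π σ) ≤ 1) : ∑ σ, u σ ≤ Fintype.card ι / 2 := by
  rw [ENNReal.le_div_iff_mul_le (by simp) (by simp), mul_two]
  calc ∑ σ, u σ + ∑ σ, u σ = ∑ σ, (u σ + u (π σ)) := by
        rw [Finset.sum_add_distrib, Equiv.sum_comp π u]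
    _ ≤ ∑ _σ : ι, 1 := Finset.sum_le_sum fun σ _ => hu σ
    _ = Fintype.card ι := by simp

theorem exists_probEvent_tv_le_of_swap [Finite ι] [Nonempty ι] (r : PMF Y) (f : ι → Y → X)
    (V : Adversary X) {G : Set (Multiset Y)} (swap : Multiset Y → Equiv.Perm ι) {t : ℝ}
    (hV : ∀ S ∈ G, ∀ σ, V (S.map (f (swap S σ))) = V (S.map (f σ)))
    (hfar : ∀ S ∈ G, ∀ σ, 2 * t < tv (r.map (f σ)) (r.map (f (swap S σ))))
    (A : Multiset X → PMF X) (m : ℕ) :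
    ∃ σ, probEvent ((iid (r.map (f σ)) m).bind V) {T | tv (A T) (r.map (f σ)) ≤ t} ≤
      2⁻¹ + probEvent (iid r m) Gᶜ := by
  cases nonempty_fintype ι
  let success (S : Multiset Y) (σ : ι) : ℝ≥0∞ :=
    probEvent (V (S.map (f σ))) {T | tv (A T) (r.map (f σ)) ≤ t}
  have sum_success_le (S : Multiset Y) :
      ∑ σ, success S σ ≤ Fintype.card ι * (2⁻¹ + Gᶜ.indicator 1 S) := by
    by_cases hS : S ∈ G
    · refine (sum_le_card_div_two_of_add_perm_le_one (swap S) fun σ => ?_).trans ?_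
      · simp only [success, hV S hS]
        exact probEvent_tv_le_add_probEvent_tv_le_le_one (hfar S hS σ) _ A
      · simp [hS, div_eq_mul_inv]
    · calc ∑ σ, success S σ ≤ ∑ _σ : ι, 1 := Finset.sum_le_sum fun σ _ => probEvent_le_one _ _
        _ ≤ Fintype.card ι * (2⁻¹ + Gᶜ.indicator 1 S) := by
          simpa [hS] using le_mul_of_one_le_right' le_add_self
  have sum_le : ∑ σ, expect (iid r m) (success · σ) ≤
      ∑ _σ : ι, (2⁻¹ + probEvent (iid r m) Gᶜ) := by
    calc ∑ σ, expect (iid r m) (success · σ)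
        ≤ expect (iid r m) fun S => Fintype.card ι * (2⁻¹ + Gᶜ.indicator 1 S) := by
          rw [← expect_finsetSum]
          exact expect_mono _ sum_success_le
      _ = ∑ _σ : ι, (2⁻¹ + probEvent (iid r m) Gᶜ) := by
          rw [expect_const_mul, expect_add, expect_const, ← probEvent_eq_expect_indicator,
            Finset.sum_const, Finset.card_univ, nsmul_eq_mul]
  obtain ⟨σ, -, hσ⟩ := ENNReal.exists_le_of_sum_le Finset.univ_nonempty sum_le
  refine ⟨σ, ?_⟩
  rwa [probEvent_bind, iid_map, expect_map]

end Swap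

section Pruning

variable {X : Type*} (M : X → Prop) [DecidablePred M] (η : ℝ)

/-- `S` without `⌊η|S|⌋` of its points, chosen among those satisfying `M` as long as there are
any. -/
noncomputable def prune (S : Multiset X) : Multiset X :=
  ((S.filter (¬ M ·)).toList ++ (S.filter M).toList).take (S.card - ⌊η * S.card⌋₊)

/-- The deterministic adversary that spends its budget `η` on deleting points satisfying `M`. -/
noncomputable def pruner : Adversary X := fun S => PMF.pure (prune M η S)

theorem coe_toList_filter_not_append (S : Multiset X) :
    (((S.filter (¬ M ·)).toList ++ (S.filter M).toList : List X) : Multiset X) = S := by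
  rw [← Multiset.coe_add, Multiset.coe_toList, Multiset.coe_toList, add_comm,
    Multiset.filter_add_not]

theorem prune_le (S : Multiset X) : prune M η S ≤ S :=
  (Multiset.coe_le.2 (List.take_sublist _ _).subperm).trans_eq (coe_toList_filter_not_append M S)

theorem card_prune (S : Multiset X) : (prune M η S).card = S.card - ⌊η * S.card⌋₊ := by
  have h := congrArg Multiset.card (coe_toList_filter_not_append M S)
  rw [Multiset.coe_card] at h
  rw [prune, Multiset.coe_card, List.length_take, h]
  exact min_eq_left (Nat.sub_le _ _)

theorem isSubtractive_pruner : IsSubtractive (pruner M η) := fun S T hT => by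
  rw [pruner, PMF.mem_support_pure_iff] at hT
  exact hT ▸ prune_le M η S

variable {η}

theorem fixedBudgetSub_pruner (hη : 0 ≤ η) (hη' : η ≤ 1) : FixedBudgetSub (pruner M η) η := by
  refine ⟨fun m => m - ⌊η * m⌋₊, fun S T hT => ?_, fun m => ?_⟩
  · rw [pruner, PMF.mem_support_pure_iff] at hT
    rw [hT, card_prune]
  · have hm : 0 ≤ η * m := by positivity
    have floor_le : ⌊η * m⌋₊ ≤ m :=
      Nat.floor_le_of_le (mul_le_of_le_one_left (Nat.cast_nonneg m) hη')
    rw [Nat.cast_sub floor_le, sub_sub_cancel]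
    exact ⟨sub_lt_iff_lt_add.2 (Nat.lt_floor_add_one _), Nat.floor_le hm⟩

variable {M}

theorem prune_eq_take_filter_not {S : Multiset X} (hS : (S.countP M : ℝ) ≤ η * S.card) :
    prune M η S = (S.filter (¬ M ·)).toList.take (S.card - ⌊η * S.card⌋₊) := by
  rw [prune, List.take_append_of_le_length]
  have card_eq := S.card_eq_countP_add_countP M
  have countP_le : S.countP M ≤ ⌊η * S.card⌋₊ := Nat.le_floor hS
  rw [Multiset.length_toList, ← Multiset.countP_eq_card_filter]
  lia

theorem prune_congr {S S' : Multiset X} (hcard : S.card = S'.card)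
    (hfilter : S.filter (¬ M ·) = S'.filter (¬ M ·)) (hS : (S.countP M : ℝ) ≤ η * S.card) :
    prune M η S = prune M η S' := by
  have countP_eq : S.countP M = S'.countP M := by
    have h := S.card_eq_countP_add_countP M
    have h' := S'.card_eq_countP_add_countP M
    rw [Multiset.countP_eq_card_filter (¬ M ·), hfilter] at h
    rw [Multiset.countP_eq_card_filter (¬ M ·)] at h'
    lia
  rw [prune_eq_take_filter_not hS, hfilter, hcard,
    prune_eq_take_filter_not (countP_eq ▸ hcard ▸ hS)]

end Pruning

section Template

variable (ι : Type*) [Fintype ι]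

/-- The masses of the template distribution: `none` stands for the origin `(0, 0)`, `some none` for
the marked point `(i, 2j+2)`, and the `some (some a)` for the points of `B_i × {2j+1}`. -/
noncomputable def templateWeight (j k : ℕ) : Option (Option ι) → ℝ≥0∞
  | none => 1 - (j : ℝ≥0∞)⁻¹
  | some none => (k : ℝ≥0∞)⁻¹
  | some (some _) => ((j : ℝ≥0∞)⁻¹ - (k : ℝ≥0∞)⁻¹) * (Fintype.card ι : ℝ≥0∞)⁻¹

variable [Nonempty ι] {j k : ℕ}

theorem sum_templateWeight (hj : 1 ≤ j) (hjk : j ≤ k) : ∑ y, templateWeight ι j k y = 1 := by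
  have sum_points : (Fintype.card ι : ℝ≥0∞) *
      (((j : ℝ≥0∞)⁻¹ - (k : ℝ≥0∞)⁻¹) * (Fintype.card ι : ℝ≥0∞)⁻¹) =
        (j : ℝ≥0∞)⁻¹ - (k : ℝ≥0∞)⁻¹ := by
    rw [mul_left_comm, ENNReal.mul_inv_cancel (by simp) (by simp), mul_one]
  have inv_k_le : (k : ℝ≥0∞)⁻¹ ≤ (j : ℝ≥0∞)⁻¹ := by gcongr
  simp only [Fintype.sum_option, templateWeight, Finset.sum_const, Finset.card_univ, nsmul_eq_mul,
    sum_points]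
  rw [add_tsub_cancel_of_le inv_k_le, tsub_add_cancel_of_le (by simpa using hj)]

/-- The common shape of the distributions `p_{i,j,k}` with `|B_i| = |ι|`: they are the images of
this distribution under the maps `place j i σ`. -/
noncomputable def template (hj : 1 ≤ j) (hjk : j ≤ k) : PMF (Option (Option ι)) :=
  PMF.ofFintype (templateWeight ι j k) (sum_templateWeight ι hj hjk)

end Template

section Flip

variable {ι : Type*} [DecidableEq ι]

/-- The involution of `ι → Bool` that negates a function on `U`. -/
def flipOn (U : Finset ι) : Equiv.Perm (ι → Bool) :=
  Equiv.piCongrRight fun a => if a ∈ U then Equiv.boolNot else Equiv.refl Bool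

theorem flipOn_apply_of_mem {U : Finset ι} {a : ι} (ha : a ∈ U) (σ : ι → Bool) :
    flipOn U σ a = !σ a := by
  simp [flipOn, ha]

theorem flipOn_apply_of_notMem {U : Finset ι} {a : ι} (ha : a ∉ U) (σ : ι → Bool) :
    flipOn U σ a = σ a := by
  simp [flipOn, ha]

variable [Fintype ι]

/-- The arguments of the hidden function whose values a template sample does not reveal. -/
def unseen (S : Multiset (Option (Option ι))) : Finset ι :=
  Finset.univ.filter fun a => some (some a) ∉ S

theorem mem_unseen {S : Multiset (Option (Option ι))} {a : ι} :
    a ∈ unseen S ↔ some (some a) ∉ S := by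
  simp [unseen]

theorem card_le_card_add_card_unseen (S : Multiset (Option (Option ι))) :
    Fintype.card ι ≤ S.card + (unseen S).card := by
  have card_seen_le : (unseen S)ᶜ.card ≤ S.card := by
    refine le_trans ?_ S.toFinset_card_le
    refine Finset.card_le_card_of_injOn (fun a => some (some a)) (fun a ha => ?_) (by simp)
    simpa [mem_unseen] using ha
  have := Finset.card_add_card_compl (unseen S)
  lia

end Flip

section Place

variable {ι : Type*} [Encodable ι] {i i' j k : ℕ} {σ : ι → Bool}

/-- The graph of `σ`, as a set of natural numbers. -/
def codedGraph [Fintype ι] (σ : ι → Bool) : Finset ℕ :=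
  Finset.univ.image fun a => Encodable.encode (a, σ a)

/-- Moves the template onto the support of `p_{i,j,k}`, where `B_i` is the graph of `σ`. -/
def place (j i : ℕ) (σ : ι → Bool) : Option (Option ι) → ℕ × ℕ
  | none => (0, 0)
  | some none => (i, 2 * j + 2)
  | some (some a) => (Encodable.encode (a, σ a), 2 * j + 1)

theorem place_injective (j i : ℕ) (σ : ι → Bool) : Function.Injective (place j i σ) := by
  rintro (_ | _ | a) (_ | _ | b) <;> simp +contextual [place]

theorem countP_map_place [DecidableEq ι] (S : Multiset (Option (Option ι))) :
    (S.map (place j i σ)).countP (·.2 = 2 * j + 2) = S.count (some none) := by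
  rw [Multiset.countP_map, Multiset.count_eq_card_filter_eq]
  congr 2
  funext y
  rcases y with _ | _ | a <;> simp [place]

variable [Fintype ι]

theorem card_codedGraph (σ : ι → Bool) : (codedGraph σ).card = Fintype.card ι :=
  Finset.card_image_of_injective _ fun _ _ h =>
    congrArg Prod.fst (Encodable.encode_injective h)

theorem isPijk_map_place [Nonempty ι] {B : ℕ → Finset ℕ} (hB : B i = codedGraph σ) (hj : 1 ≤ j)
    (hjk : j ≤ k) : IsPijk B i j k ((template ι hj hjk).map (place j i σ)) := by
  intro x
  by_cases hx : x ∈ Set.range (place j i σ)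
  · obtain ⟨y, rfl⟩ := hx
    rw [map_apply_of_injective _ (place_injective j i σ), hB, card_codedGraph]
    rcases y with _ | _ | a <;> simp [template, templateWeight, place, codedGraph]
  · have ne_place (y) : x ≠ place j i σ y := fun h => hx ⟨y, h.symm⟩
    have ne_point : ¬ (x.1 ∈ codedGraph σ ∧ x.2 = 2 * j + 1) := by
      rintro ⟨hx₁, hx₂⟩
      obtain ⟨a, -, ha⟩ := Finset.mem_image.1 hx₁
      exact ne_place (some (some a)) (Prod.ext ha.symm hx₂)
    have ne_origin : x ≠ (0, 0) := ne_place none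
    have ne_marked : x ≠ (i, 2 * j + 2) := ne_place (some none)
    rw [map_apply_of_notMem_range _ hx, hB, if_neg ne_origin, if_neg ne_point, if_neg ne_marked]
    simp

theorem map_place_mem_Cg [Nonempty ι] {B : ℕ → Finset ℕ} {g : ℕ → ℕ} (hB : B i = codedGraph σ)
    (hj : 1 ≤ j) (hjg : j < g j) : (template ι hj hjg.le).map (place j i σ) ∈ Cg B g :=
  ⟨i, j, hj, hjg, by rw [← Finset.card_pos, hB, card_codedGraph]; exact Fintype.card_pos,
    isPijk_map_place hB hj hjg.le⟩

variable [DecidableEq ι]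

theorem filter_not_map_place_flipOn_unseen (S : Multiset (Option (Option ι))) :
    (S.map (place j i (flipOn (unseen S) σ))).filter (¬ ·.2 = 2 * j + 2) =
      (S.map (place j i' σ)).filter (¬ ·.2 = 2 * j + 2) := by
  rw [Multiset.filter_map, Multiset.filter_map,
    Multiset.filter_congr (q := ((¬ ·.2 = 2 * j + 2) ∘ place j i' σ))]
  · refine Multiset.map_congr rfl fun y hy => ?_
    obtain ⟨hyS, hy⟩ := Multiset.mem_filter.1 hy
    rcases y with _ | _ | a
    · rfl
    · exact absurd rfl hy
    · have ha : a ∉ unseen S := fun h => mem_unseen.1 h hyS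
      simp only [place, flipOn_apply_of_notMem ha]
  · rintro (_ | _ | a) - <;> simp [place]

theorem prune_map_place_flipOn_unseen {η : ℝ} {S : Multiset (Option (Option ι))}
    (hS : (S.count (some none) : ℝ) ≤ η * S.card) :
    prune (·.2 = 2 * j + 2) η (S.map (place j i (flipOn (unseen S) σ))) =
      prune (·.2 = 2 * j + 2) η (S.map (place j i' σ)) :=
  prune_congr (by simp) (filter_not_map_place_flipOn_unseen S)
    (by rwa [countP_map_place, Multiset.card_map])

theorem card_mul_le_tv_map_place_flipOn [Nonempty ι] (hj : 1 ≤ j) (hjk : j ≤ k) (U : Finset ι) :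
    U.card * (((j : ℝ)⁻¹ - (k : ℝ)⁻¹) / Fintype.card ι) / 2 ≤
      tv ((template ι hj hjk).map (place j i σ))
        ((template ι hj hjk).map (place j i' (flipOn U σ))) := by
  let point (a : ι) : ℕ × ℕ := place j i σ (some (some a))
  have point_injective : Function.Injective point :=
    (place_injective j i σ).comp ((Option.some_injective _).comp (Option.some_injective _))
  rw [← Finset.card_image_of_injective U point_injective]
  refine card_mul_div_two_le_tv fun x hx => ?_
  obtain ⟨a, ha, rfl⟩ := Finset.mem_image.1 hx
  have point_notMem_range : point a ∉ Set.range (place j i' (flipOn U σ)) := by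
    rintro ⟨_ | _ | b, hb⟩ <;> simp only [point, place, Prod.mk.injEq] at hb
    · lia
    · lia
    · obtain ⟨rfl, hb⟩ := Prod.ext_iff.1 (Encodable.encode_injective hb.1)
      simp [flipOn_apply_of_mem ha] at hb
  have inv_le : (k : ℝ≥0∞)⁻¹ ≤ (j : ℝ≥0∞)⁻¹ := by gcongr
  have inv_ne_top : (j : ℝ≥0∞)⁻¹ ≠ ⊤ := by simpa using Nat.ne_of_gt hj
  rw [map_apply_of_notMem_range _ point_notMem_range,
    map_apply_of_injective _ (place_injective j i σ)]
  simp [template, templateWeight, ENNReal.toReal_sub_of_le inv_le inv_ne_top, div_eq_mul_inv]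

theorem quarter_le_tv_map_place_flipOn_unseen [Nonempty ι] (hj : 1 ≤ j) (hjk : j ≤ k)
    {S : Multiset (Option (Option ι))} (hS : 2 * S.card ≤ Fintype.card ι) :
    ((j : ℝ)⁻¹ - (k : ℝ)⁻¹) / 4 ≤ tv ((template ι hj hjk).map (place j i σ))
      ((template ι hj hjk).map (place j i' (flipOn (unseen S) σ))) := by
  refine le_trans ?_ (card_mul_le_tv_map_place_flipOn hj hjk (unseen S))
  have inv_le : (k : ℝ)⁻¹ ≤ (j : ℝ)⁻¹ := by gcongr
  have half_le : (1 / 2 : ℝ) ≤ (unseen S).card / Fintype.card ι := by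
    have := card_le_card_add_card_unseen S
    rw [div_le_div_iff₀ two_pos (by exact_mod_cast Fintype.card_pos)]
    exact_mod_cast (by lia : 1 * Fintype.card ι ≤ (unseen S).card * 2)
  calc ((j : ℝ)⁻¹ - (k : ℝ)⁻¹) / 4 = 1 / 2 * ((j : ℝ)⁻¹ - (k : ℝ)⁻¹) / 2 := by ring
    _ ≤ (unseen S).card / Fintype.card ι * ((j : ℝ)⁻¹ - (k : ℝ)⁻¹) / 2 := by
      have := sub_nonneg.2 inv_le
      gcongr
    _ = (unseen S).card * (((j : ℝ)⁻¹ - (k : ℝ)⁻¹) / Fintype.card ι) / 2 := by ring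

end Place

theorem exists_two_mul_add_lt_inv_sub_inv_div_four {α j k : ℝ} (hj : 0 < j) (hk : 0 < k)
    (hjk : (32 * α + 1) * j < k) :
    ∃ ε, 0 < ε ∧ ε < 1 ∧ 2 * (α * (4 / k) + ε) < (j⁻¹ - k⁻¹) / 4 := by
  have gap : 0 < (j⁻¹ - k⁻¹) / 8 - α * (4 / k) := by
    have : (j⁻¹ - k⁻¹) / 8 - α * (4 / k) = (k - (32 * α + 1) * j) / (8 * j * k) := by
      field_simp
      ring
    rw [this]
    exact div_pos (sub_pos.2 hjk) (by positivity)
  obtain ⟨ε, hε, hε'⟩ := exists_between (lt_min one_pos gap)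
  rw [lt_min_iff] at hε'
  exact ⟨ε, hε, hε'.1, by linarith [hε'.2]⟩

theorem universalAdversary_pruner {B : ℕ → Finset ℕ} (hB : Function.Surjective B) {g : ℕ → ℕ}
    {α : ℝ} {j : ℕ} (hj : 1 ≤ j) (hjg : j < g j) (hα : (32 * α + 1) * j < g j) :
    UniversalAdversary (Cg B g) α (pruner (·.2 = 2 * j + 2) (4 / g j)) (4 / g j) := by
  rintro ⟨A, mc, hA⟩
  obtain ⟨ε, hε, hε', gap⟩ := exists_two_mul_add_lt_inv_sub_inv_div_four
    (by exact_mod_cast hj) (by exact_mod_cast hj.trans hjg.le) hα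
  let m := mc ε 8⁻¹ + 1
  let r := template (Fin (2 * m)) hj hjg.le
  choose index hindex using fun σ : Fin (2 * m) → Bool => hB (codedGraph σ)
  obtain ⟨σ, hσ⟩ := exists_probEvent_tv_le_of_swap r (fun σ => place j (index σ) σ)
    (pruner (·.2 = 2 * j + 2) (4 / g j))
    (G := {S | S.card = m ∧ (S.count (some none) : ℝ) ≤ 4 / g j * S.card})
    (fun S => flipOn (unseen S))
    (fun S hS σ => congrArg PMF.pure (prune_map_place_flipOn_unseen hS.2))
    (fun S hS σ => gap.trans_le
      (quarter_le_tv_map_place_flipOn_unseen hj hjg.le (by simp [hS.1]))) A m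
  have success_ge := hA _ (map_place_mem_Cg (hindex σ) hj hjg) ε 8⁻¹ hε hε'
    (by norm_num) (by norm_num) m (Nat.le_succ _)
  have hr : r (some none) = (g j : ℝ≥0∞)⁻¹ := rfl
  have hη : ENNReal.ofReal (4 / g j) = 4 * r (some none) := by
    rw [ENNReal.ofReal_div_of_pos (by exact_mod_cast Nat.zero_lt_of_lt hjg), hr, div_eq_mul_inv]
    simp
  have success_le := hσ.trans (add_le_add_right
    (probEvent_iid_compl_count_le_mul_card_le r (by simp [hr]) (Nat.succ_ne_zero _) hη) 2⁻¹)
  have seven_eighths_le : 1 - ENNReal.ofReal 8⁻¹ ≤ 2⁻¹ + 4⁻¹ := success_ge.trans success_le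
  have := ENNReal.toReal_mono (by simp) seven_eighths_le
  rw [ENNReal.toReal_sub_of_le (by simp) (by simp), ENNReal.toReal_add (by simp) (by simp)] at this
  norm_num at this

theorem stmt2_general (B : ℕ → Finset ℕ) (hB : Function.Surjective B) (g : ℕ → ℕ) (α : ℝ)
    (hg : ∃ j, 1 ≤ j ∧ 33 * max α 1 * j < g j) :
    ¬ SubtractivelyRobustlyLearnable (Cg B g) α ∧
      ∃ (V : Adversary (ℕ × ℕ)) (η : ℝ), 0 < η ∧ η < 1 ∧ IsSubtractive V ∧
        FixedBudgetSub V η ∧ UniversalAdversary (Cg B g) α V η := by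
  obtain ⟨j, hj, hjg⟩ := hg
  have one_le_j : (1 : ℝ) ≤ j := by exact_mod_cast hj
  have mul_lt : 33 * j < (g j : ℝ) := lt_of_le_of_lt (by gcongr; linarith [le_max_right α 1]) hjg
  have hα : (32 * α + 1) * j < g j :=
    lt_of_le_of_lt (by gcongr; linarith [le_max_left α 1, le_max_right α 1]) hjg
  have j_lt : j < g j := by exact_mod_cast (by linarith : (j : ℝ) < g j)
  have hη : (0 : ℝ) < 4 / g j := div_pos four_pos (by linarith)
  have hη' : (4 : ℝ) / g j < 1 := (div_lt_one (by linarith)).2 (by linarith)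
  have subtractive := isSubtractive_pruner (X := ℕ × ℕ) (·.2 = 2 * j + 2) (4 / g j)
  have budget := fixedBudgetSub_pruner (X := ℕ × ℕ) (·.2 = 2 * j + 2) hη.le hη'.le
  have universal := universalAdversary_pruner hB hj j_lt hα
  exact ⟨fun ⟨A, mc, hA⟩ => universal ⟨A, mc, hA _ _ hη hη' subtractive budget⟩,
    _, _, hη, hη', subtractive, budget, universal⟩

/-- For every superlinear `g` and every `α ≥ 1`, the class `C_g` is not
adaptively subtractively α-robustly learnable; moreover there is an adaptive subtractive
adversary with fixed constant budget that is a universal α-adversary for `C_g`. -/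
theorem stmt2 (B : ℕ → Finset ℕ) (hB : Function.Surjective B)
    (g : ℕ → ℕ) (hg : Superlinear g) (α : ℝ) (hα : 1 ≤ α) :
    ¬ SubtractivelyRobustlyLearnable (Cg B g) α ∧
      ∃ (V : Adversary (ℕ × ℕ)) (η : ℝ), 0 < η ∧ η < 1 ∧ IsSubtractive V ∧
        FixedBudgetSub V η ∧ UniversalAdversary (Cg B g) α V η := by
  obtain ⟨j, hj, hjg⟩ := ((Filter.eventually_ge_atTop 1).and (hg.eventually_gt_atTop _)).exists
  exact stmt2_general B hB g α ⟨j, hj, (lt_div_iff₀ (by exact_mod_cast hj)).1 hjg⟩
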